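/- arXiv:1105.1067 — 2 statements merged into one kernel-verified Lean document; each statement's English description precedes it below -/
import Mathlib

section
/- Let α, β be permutations of {1,...,8} that are each a product of four disjoint 2-cycles (cycle type {2,2,2,2}) and let γ be the identity permutation of {1,...,8}. Then the number of Latin squares of order 8 having Θ = (α,β,γ) as an autotopism is 828396011520. -/
/-- A Latin square of order `n`: each row and each column is a bijection. -/
def IsLatinSquare {n : ℕ} (L : Fin n → Fin n → Fin n) : Prop :=
  (∀ i, Function.Bijective (L i)) ∧ (∀ j, Function.Bijective fun i => L i j)

/-- `(α, β, γ)` is an autotopism of the Latin square `L`. -/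
def IsAutotopism {n : ℕ} (α β γ : Equiv.Perm (Fin n)) (L : Fin n → Fin n → Fin n) : Prop :=
  ∀ i j, L (α i) (β j) = γ (L i j)


/-- Subtract a 0/1 vector. -/
def pSub : List ℕ → List Bool → Option (List ℕ)
  | T, [] => some T
  | [], false :: v => pSub [] v
  | [], true :: _ => none
  | t :: T, false :: v => (pSub T v).map (t :: ·)
  | 0 :: _, true :: _ => none
  | (t + 1) :: T, true :: v => (pSub T v).map (t :: ·)

def pD (T : List ℕ) : ℕ → ℕ := fun i => T.getD i 0
def pB (v : List Bool) : ℕ → ℕ := fun i => if v.getD i false then 1 else 0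

def pLoop (F : ℕ → List ℕ → ℕ) (v : List Bool) (N : ℕ) : ℕ → List ℕ → ℕ → ℕ
  | 0, T, m => N.choose m * F (N - m) T
  | k + 1, T, m => N.choose m * F (N - m) T +
      match pSub T v with
      | none => 0
      | some T' => pLoop F v N k T' (m + 1)

def pAll0 : List ℕ → Bool
  | [] => true
  | 0 :: T => pAll0 T
  | (_ + 1) :: _ => false

def pComp : List (List Bool ⊕ ℕ) → ℕ → List ℕ → ℕ
  | [], 0, T => if pAll0 T then 1 else 0
  | [], _ + 1, _ => 0
  | .inl v :: l, n, T => pLoop (pComp l) v n n T 0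
  | .inr c :: l, n, T => match T.getD c 0 with
      | 0 => pComp l n T
      | _ + 1 => 0

def pItems : List (List Bool ⊕ ℕ) := [
  .inl [true,false,false,false,false,true,false,false,false,false,true,false,false,false,false,true],
  .inl [true,false,false,false,false,true,false,false,false,false,false,true,false,false,true,false],
  .inl [true,false,false,false,false,false,true,false,false,true,false,false,false,false,false,true],
  .inl [true,false,false,false,false,false,true,false,false,false,false,true,false,true,false,false],
  .inl [true,false,false,false,false,false,false,true,false,true,false,false,false,false,true,false],
  .inl [true,false,false,false,false,false,false,true,false,false,true,false,false,true,false,false],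
  .inr 0,
  .inl [false,true,false,false,true,false,false,false,false,false,true,false,false,false,false,true],
  .inl [false,true,false,false,true,false,false,false,false,false,false,true,false,false,true,false],
  .inl [false,true,false,false,false,false,true,false,true,false,false,false,false,false,false,true],
  .inl [false,true,false,false,false,false,true,false,false,false,false,true,true,false,false,false],
  .inl [false,true,false,false,false,false,false,true,true,false,false,false,false,false,true,false],
  .inl [false,true,false,false,false,false,false,true,false,false,true,false,true,false,false,false],
  .inr 1,
  .inl [false,false,true,false,true,false,false,false,false,true,false,false,false,false,false,true],
  .inl [false,false,true,false,true,false,false,false,false,false,false,true,false,true,false,false],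
  .inl [false,false,true,false,false,true,false,false,true,false,false,false,false,false,false,true],
  .inl [false,false,true,false,false,true,false,false,false,false,false,true,true,false,false,false],
  .inl [false,false,true,false,false,false,false,true,true,false,false,false,false,true,false,false],
  .inl [false,false,true,false,false,false,false,true,false,true,false,false,true,false,false,false],
  .inr 2,
  .inl [false,false,false,true,true,false,false,false,false,true,false,false,false,false,true,false],
  .inl [false,false,false,true,true,false,false,false,false,false,true,false,false,true,false,false],
  .inl [false,false,false,true,false,true,false,false,true,false,false,false,false,false,true,false],
  .inl [false,false,false,true,false,true,false,false,false,false,true,false,true,false,false,false],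
  .inl [false,false,false,true,false,false,true,false,true,false,false,false,false,true,false,false],
  .inl [false,false,false,true,false,false,true,false,false,true,false,false,true,false,false,false],
  .inr 3]
def pPerms : List (Fin 4 → Fin 4) := [
  ![0,1,2,3],
  ![0,1,3,2],
  ![0,2,1,3],
  ![0,2,3,1],
  ![0,3,1,2],
  ![0,3,2,1],
  ![1,0,2,3],
  ![1,0,3,2],
  ![1,2,0,3],
  ![1,2,3,0],
  ![1,3,0,2],
  ![1,3,2,0],
  ![2,0,1,3],
  ![2,0,3,1],
  ![2,1,0,3],
  ![2,1,3,0],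
  ![2,3,0,1],
  ![2,3,1,0],
  ![3,0,1,2],
  ![3,0,2,1],
  ![3,1,0,2],
  ![3,1,2,0],
  ![3,2,0,1],
  ![3,2,1,0]]

theorem pSub_some : ∀ (T : List ℕ) (v : List Bool) (U : List ℕ), pSub T v = some U →
    pD T = pB v + pD U := by
  intro T v
  induction T, v using pSub.induct with
  | case1 T => intro U h; simp [pSub] at h; subst h; funext i; simp [pB]
  | case2 v ih =>
    intro U h
    have := ih U (by simpa [pSub] using h)
    funext i
    cases i with
    | zero =>
      have h0 := congrFun this
      simp only [pD, pB, Pi.add_apply] at h0 ⊢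
      have hU : ∀ i, U.getD i 0 = 0 := by
        intro i; have := h0 i; simp only [List.getD_nil] at this; omega
      rw [hU]; simp
    | succ i =>
      have h0 := congrFun this
      simp only [pD, pB, Pi.add_apply] at h0 ⊢
      have h1 := h0 i
      have h2 := h0 (i+1)
      simp only [List.getD_nil, List.getD_cons_succ] at h1 h2 ⊢
      omega
  | case3 v => intro U h; simp [pSub] at h
  | case4 t T v ih =>
    intro U h
    simp only [pSub, Option.map_eq_some_iff] at h
    obtain ⟨U', h1, rfl⟩ := h
    have h0 := congrFun (ih U' h1)
    funext i
    cases i with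
    | zero => simp [pD, pB]
    | succ i => simpa [pD, pB] using h0 i
  | case5 T v => intro U h; simp [pSub] at h
  | case6 t T v ih =>
    intro U h
    simp only [pSub, Option.map_eq_some_iff] at h
    obtain ⟨U', h1, rfl⟩ := h
    have h0 := congrFun (ih U' h1)
    funext i
    cases i with
    | zero => simp [pD, pB]; omega
    | succ i => simpa [pD, pB] using h0 i

theorem pSub_none : ∀ (T : List ℕ) (v : List Bool), pSub T v = none →
    ∀ d, pB v + d ≠ pD T := by
  intro T v
  induction T, v using pSub.induct with
  | case1 T => intro h; simp [pSub] at h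
  | case2 v ih =>
    intro h d hd
    refine ih (by simpa [pSub] using h) (fun i => d (i+1)) ?_
    funext i
    have := congrFun hd (i+1)
    simpa [pD, pB] using this
  | case3 v =>
    intro _ d hd
    have := congrFun hd 0
    simp [pD, pB] at this
  | case4 t T v ih =>
    intro h d hd
    refine ih (by simpa [pSub] using h) (fun i => d (i+1)) ?_
    funext i
    have := congrFun hd (i+1)
    simpa [pD, pB] using this
  | case5 T v =>
    intro _ d hd
    have := congrFun hd 0
    simp [pD, pB] at this
  | case6 t T v ih =>
    intro h d hd
    refine ih (by simpa [pSub] using h) (fun i => d (i+1)) ?_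
    funext i
    have := congrFun hd (i+1)
    simpa [pD, pB] using this

theorem pAll0_iff : ∀ T, pAll0 T = true ↔ pD T = 0
  | [] => by simp [pAll0]; rfl
  | 0 :: T => by
    rw [pAll0, pAll0_iff T]
    constructor
    · intro h; funext i
      cases i with
      | zero => simp [pD]
      | succ i => simpa [pD] using congrFun h i
    · intro h; funext i
      simpa [pD] using congrFun h (i+1)
  | (t + 1) :: T => by
    simp only [pAll0, Bool.false_eq_true, false_iff]
    intro h
    simpa [pD] using congrFun h 0

noncomputable def pX (v : ℕ → ℕ) : AddMonoidAlgebra ℕ (ℕ → ℕ) := AddMonoidAlgebra.single v 1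

theorem pX_coeff_add (v d : ℕ → ℕ) (Q : AddMonoidAlgebra ℕ (ℕ → ℕ)) :
    (pX v * Q).coeff (v + d) = Q.coeff d := by
  rw [pX, AddMonoidAlgebra.coeff_single_mul_eq_mul_coeff d (by simp)]; simp

theorem pX_coeff_none (v T : ℕ → ℕ) (Q : AddMonoidAlgebra ℕ (ℕ → ℕ)) (h : ∀ d, v + d ≠ T) :
    (pX v * Q).coeff T = 0 :=
  AddMonoidAlgebra.coeff_single_mul_of_forall_add_ne _ _ h

noncomputable def pP : List (List Bool ⊕ ℕ) → AddMonoidAlgebra ℕ (ℕ → ℕ)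
  | [] => 0
  | .inl v :: l => pX (pB v) + pP l
  | .inr _ :: l => pP l

def pOk : List (List Bool ⊕ ℕ) → Bool
  | [] => true
  | .inl _ :: l => pOk l
  | .inr c :: l => (l.all fun x => match x with
      | .inl v => !(v.getD c false)
      | .inr _ => true) && pOk l

noncomputable def pS (v : List Bool) (Q : AddMonoidAlgebra ℕ (ℕ → ℕ)) (N k m : ℕ) :
    AddMonoidAlgebra ℕ (ℕ → ℕ) :=
  ∑ j ∈ Finset.range (k + 1), (N.choose (m + j)) • (pX (pB v) ^ j * Q ^ (N - (m + j)))

theorem pS_succ (v : List Bool) (Q : AddMonoidAlgebra ℕ (ℕ → ℕ)) (N k m : ℕ) :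
    pS v Q N (k + 1) m = N.choose m • Q ^ (N - m) + pX (pB v) * pS v Q N k (m + 1) := by
  rw [pS, Finset.sum_range_succ', add_comm, pS, Finset.mul_sum]
  congr 1
  · simp
  · apply Finset.sum_congr rfl
    intro j _
    rw [show m + (j + 1) = m + 1 + j by ring, pow_succ', mul_smul_comm, mul_assoc]

theorem pLoop_spec (F : ℕ → List ℕ → ℕ) (v : List Bool) (Q : AddMonoidAlgebra ℕ (ℕ → ℕ)) (N : ℕ)
    (hF : ∀ n T, F n T = (Q ^ n).coeff (pD T)) :
    ∀ k T m, pLoop F v N k T m = (pS v Q N k m).coeff (pD T) := by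
  intro k
  induction k with
  | zero =>
    intro T m
    simp only [pLoop, pS, hF, zero_add, Finset.sum_range_one, add_zero, pow_zero, one_mul,
      AddMonoidAlgebra.coeff_smul, Finsupp.smul_apply, smul_eq_mul]
  | succ k ih =>
    intro T m
    rw [pLoop, pS_succ, AddMonoidAlgebra.coeff_add, Finsupp.add_apply]
    congr 1
    · simp only [hF, AddMonoidAlgebra.coeff_smul, Finsupp.smul_apply, smul_eq_mul]
    · cases h : pSub T v with
      | none => simp only; rw [pX_coeff_none _ _ _ (pSub_none _ _ h)]
      | some U => simp only; rw [pSub_some _ _ _ h, pX_coeff_add, ih]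

theorem pS_full (v : List Bool) (Q : AddMonoidAlgebra ℕ (ℕ → ℕ)) (n : ℕ) :
    pS v Q n n 0 = (pX (pB v) + Q) ^ n := by
  rw [add_pow, pS]
  apply Finset.sum_congr rfl
  intro j _
  simp [mul_comm]

open Classical in
theorem pDead (c : ℕ) (T : ℕ → ℕ) (hT : T c ≠ 0) (l : List (List Bool ⊕ ℕ))
    (hl : ∀ v, Sum.inl v ∈ l → pB v c = 0) (n : ℕ) : ((pP l) ^ n).coeff T = 0 := by
  have key : ∀ (l : List (List Bool ⊕ ℕ)), (∀ v, Sum.inl v ∈ l → pB v c = 0) →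
      ∀ T : ℕ → ℕ, T c ≠ 0 → ∀ Q : AddMonoidAlgebra ℕ (ℕ → ℕ),
      (∀ U : ℕ → ℕ, U c ≠ 0 → Q.coeff U = 0) → (pP l * Q).coeff T = 0 := by
    intro l
    induction l with
    | nil => intro _ T _ Q _; simp [pP]
    | cons x l ih =>
      intro hl T hT Q hQ
      have ih' := ih (fun v hv => hl v (List.mem_cons_of_mem _ hv)) T hT Q hQ
      cases x with
      | inr a => simpa [pP] using ih'
      | inl v =>
        rw [pP, add_mul, AddMonoidAlgebra.coeff_add, Finsupp.add_apply, ih', add_zero]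
        by_cases h : ∃ d, pB v + d = T
        · obtain ⟨d, rfl⟩ := h
          rw [pX_coeff_add]
          apply hQ
          simpa [hl v List.mem_cons_self] using hT
        · push Not at h
          exact pX_coeff_none _ _ _ h
  induction n generalizing T with
  | zero =>
    rw [pow_zero, AddMonoidAlgebra.one_def, AddMonoidAlgebra.coeff_single, Finsupp.single_apply,
      if_neg]
    rintro rfl; exact hT rfl
  | succ n ih =>
    rw [pow_succ']
    exact key l hl T hT _ (fun U hU => ih U hU)

open Classical in
theorem pComp_spec : ∀ l, pOk l = true → ∀ n T, pComp l n T = ((pP l) ^ n).coeff (pD T) := by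
  intro l
  induction l with
  | nil =>
    intro _ n T
    cases n with
    | zero =>
      rw [pow_zero, AddMonoidAlgebra.one_def, AddMonoidAlgebra.coeff_single, Finsupp.single_apply,
        pComp]
      simp only [pAll0_iff, eq_comm (a := (0 : ℕ → ℕ))]
    | succ n => simp [pComp, pP]
  | cons x l ih =>
    intro h n T
    cases x with
    | inl v =>
      rw [pComp, pP, ← pS_full]
      exact pLoop_spec _ _ _ _ (ih (by simpa [pOk] using h)) _ _ _
    | inr c =>
      simp only [pOk, Bool.and_eq_true, List.all_eq_true] at h
      rw [pComp, pP]
      cases hc : T.getD c 0 with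
      | zero => simp only; exact ih h.2 n T
      | succ k =>
        simp only
        rw [pDead c (pD T) (by simp only [pD, hc]; omega) l]
        intro v hv
        have := h.1 _ hv
        simp at this
        simp [pB, this]

def pW (p : Fin 4 → Fin 4) : ℕ → ℕ := fun i => if h : i < 16 then
  (if p ⟨i / 4, by omega⟩ = ⟨i % 4, by omega⟩ then 1 else 0) else 0

def pVec (p : Fin 4 → Fin 4) : List Bool :=
  List.ofFn fun i : Fin 16 => decide (p ⟨i / 4, by omega⟩ = ⟨i % 4, by omega⟩)

theorem pB_pVec (p : Fin 4 → Fin 4) : pB (pVec p) = pW p := by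
  funext i
  by_cases h : i < 16
  · simp only [pB, pVec, pW, List.getD_eq_getElem?_getD, List.getElem?_ofFn, dif_pos h,
      Option.getD_some, decide_eq_true_eq]
  · simp only [pB, pVec, pW, List.getD_eq_getElem?_getD, List.getElem?_ofFn, dif_neg h,
      Option.getD_none, Bool.false_eq_true, if_false]

def pErase : List (List Bool ⊕ ℕ) → List (List Bool)
  | [] => []
  | .inl v :: l => v :: pErase l
  | .inr _ :: l => pErase l

theorem pP_erase : ∀ l, pP l = ((pErase l).map fun v => pX (pB v)).sum
  | [] => rfl
  | .inl v :: l => by simp [pP, pErase, pP_erase l]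
  | .inr _ :: l => by simp [pP, pErase, pP_erase l]

theorem pItems_erase : pErase pItems = pPerms.map pVec := by decide +kernel

theorem pPerms_nodup : pPerms.Nodup := by decide +kernel

theorem pPerms_mem : ∀ p : Fin 4 → Fin 4, p ∈ pPerms ↔ Function.Injective p := by decide +kernel

theorem pP_items : pP pItems = ∑ p ∈ pPerms.toFinset, pX (pW p) := by
  rw [pP_erase, pItems_erase, List.sum_toFinset _ pPerms_nodup, List.map_map]
  congr 2
  funext p
  simp [pB_pVec]

theorem pComp_val : pComp pItems 8 (List.replicate 16 2) = 12640320 := by decide +kernel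

theorem pOk_items : pOk pItems = true := by decide +kernel

theorem pX_prod (f : Fin 8 → (ℕ → ℕ)) : ∏ s, pX (f s) = pX (∑ s, f s) := by
  simp only [pX, AddMonoidAlgebra.prod_single, Finset.prod_const_one]

open Classical in
theorem coeff_sum' {ι : Type*} (S : Finset ι) (g : ι → ℕ → ℕ) (T : ℕ → ℕ) :
    (∑ x ∈ S, pX (g x)).coeff T = (S.filter fun x => g x = T).card := by
  rw [AddMonoidAlgebra.coeff_sum, Finsupp.finsetSum_apply]
  simp only [pX, AddMonoidAlgebra.coeff_single, Finsupp.single_apply]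
  rw [← Finset.card_filter]

open Classical in
theorem coeff_pow8 (S : Finset (Fin 4 → Fin 4)) (T : ℕ → ℕ) :
    ((∑ p ∈ S, pX (pW p)) ^ 8).coeff T =
      ((Fintype.piFinset fun _ : Fin 8 => S).filter fun f => ∑ s, pW (f s) = T).card := by
  have h2 : (∑ p ∈ S, pX (pW p)) ^ 8 = ∏ _s : Fin 8, ∑ p ∈ S, pX (pW p) := by simp
  rw [h2, Finset.prod_univ_sum]
  simp only [pX_prod]
  exact coeff_sum' _ _ _

def VF (f : Fin 8 → Fin 4 → Fin 4) : Prop :=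
  (∀ s, Function.Injective (f s)) ∧ ∀ I J, (Finset.univ.filter fun s => f s I = J).card = 2

theorem count_VF (N : ℕ) (hN : pComp pItems 8 (List.replicate 16 2) = N) :
    Nat.card {f // VF f} = N := by
  have h := pComp_spec pItems pOk_items 8 (List.replicate 16 2)
  rw [hN, pP_items, coeff_pow8] at h
  rw [h]
  apply Nat.subtype_card
  intro f
  simp only [Finset.mem_filter, Fintype.mem_piFinset, List.mem_toFinset, pPerms_mem]
  refine and_congr_right fun _ => ?_
  refine Iff.symm ⟨?_, ?_⟩
  · intro hf
    funext i
    by_cases hi : i < 16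
    · have := hf ⟨i / 4, by omega⟩ ⟨i % 4, by omega⟩
      rw [Finset.card_filter] at this
      simp only [Finset.sum_apply, pW, hi, dif_pos]
      rw [this]
      simp only [pD, List.getD_eq_getElem?_getD, List.getElem?_replicate, hi, if_true,
        Option.getD_some]
    · simp [Finset.sum_apply, pW, hi, pD, List.getD_eq_getElem?_getD]
  · intro hf I J
    have := congrFun hf (4 * I + J)
    have hi : 4 * (I : ℕ) + J < 16 := by omega
    have e1 : (4 * (I : ℕ) + J) / 4 = I := by omega
    have e2 : (4 * (I : ℕ) + J) % 4 = J := by omega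
    simp only [Finset.sum_apply, pW, hi, dif_pos, e1, e2, Fin.eta] at this
    rw [Finset.card_filter, this]
    simp only [pD, List.getD_eq_getElem?_getD, List.getElem?_replicate, hi, if_true,
        Option.getD_some]

def VM (M : Fin 4 → Fin 4 → Bool → Fin 8) : Prop :=
  (∀ I, Function.Injective fun x : Fin 4 × Bool => M I x.1 x.2) ∧
  (∀ J, Function.Injective fun x : Fin 4 × Bool => M x.1 J x.2)

abbrev SF := Σ f : {f // VF f}, (∀ I J, Bool ↪ {s // f.1 s I = J})

theorem VF.fib {f} (hf : VF f) (I J) : Fintype.card {s // f s I = J} = 2 := by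
  rw [Fintype.card_subtype]; exact hf.2 I J

def toM (x : SF) : {M // VM M} := ⟨fun I J z => (x.2 I J z).1, by
  obtain ⟨⟨f, hf⟩, e⟩ := x
  constructor
  · rintro I ⟨J, z⟩ ⟨J', z'⟩ h
    simp only at h
    have h1 := (e I J z).2
    have h2 := (e I J' z').2
    rw [h] at h1
    simp only at h1 h2
    obtain rfl : J = J' := h1.symm.trans h2
    rw [(e I J).injective (Subtype.ext h)]
  · rintro J ⟨I, z⟩ ⟨I', z'⟩ h
    simp only at h
    have h1 := (e I J z).2
    have h2 := (e I' J z').2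
    rw [h] at h1
    simp only at h1 h2
    obtain rfl : I = I' := hf.1 _ (h1.trans h2.symm)
    rw [(e I J).injective (Subtype.ext h)]⟩

theorem toM_inj : Function.Injective toM := by
  rintro ⟨⟨f, hf⟩, e⟩ ⟨⟨f', hf'⟩, e'⟩ h
  have h : ∀ I J z, (e I J z).1 = (e' I J z).1 := fun I J z =>
    congrFun (congrFun (congrFun (congrArg Subtype.val h) I) J) z
  have hff : f = f' := by
    funext s I
    have hb : Function.Bijective (e I (f s I)) := by
      rw [Fintype.bijective_iff_injective_and_card]
      exact ⟨(e I (f s I)).injective, by rw [hf.fib]; rfl⟩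
    obtain ⟨z, hz⟩ := hb.2 ⟨s, rfl⟩
    have h1 := (e' I (f s I) z).2
    rw [← h, hz] at h1
    exact h1.symm
  subst hff
  congr 1
  funext I J
  ext z
  exact congrArg Fin.val (h I J z)

theorem toM_surj : Function.Surjective toM := by
  rintro ⟨M, h1, h2⟩
  have hb : ∀ I, Function.Bijective fun x : Fin 4 × Bool => M I x.1 x.2 := fun I => by
    rw [Fintype.bijective_iff_injective_and_card]
    exact ⟨h1 I, by simp⟩
  choose g hg using fun (s : Fin 8) (I : Fin 4) => (hb I).2 s
  simp only at hg
  have hgM : ∀ I J z, g (M I J z) I = (J, z) := fun I J z => h1 I (hg (M I J z) I)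
  have hf : VF (fun s I => (g s I).1) := by
    constructor
    · intro s I I' h
      simp only at h
      have e1 := hg s I
      have e2 := hg s I'
      rw [← h] at e2
      have := h2 (g s I).1 (a₁ := (I, (g s I).2)) (a₂ := (I', (g s I').2)) (e1.trans e2.symm)
      exact congrArg Prod.fst this
    · intro I J
      have : (Finset.univ.filter fun s => (g s I).1 = J) =
          Finset.univ.image (fun z => M I J z) := by
        ext s
        simp only [Finset.mem_filter, Finset.mem_univ, true_and, Finset.mem_image]
        constructor
        · rintro rfl; exact ⟨_, hg s I⟩
        · rintro ⟨z, rfl⟩; rw [hgM]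
      rw [this, Finset.card_image_of_injective]
      · simp
      · intro z z' hz
        have := h1 I (a₁ := (J, z)) (a₂ := (J, z')) hz
        exact congrArg Prod.snd this
  refine ⟨⟨⟨_, hf⟩, fun I J => ⟨fun z => ⟨M I J z, by simp only [hgM]⟩, ?_⟩⟩, rfl⟩
  intro z z' hz
  have := h1 I (a₁ := (J, z)) (a₂ := (J, z')) (congrArg Subtype.val hz)
  exact congrArg Prod.snd this

theorem count_VM (N : ℕ) (hN : pComp pItems 8 (List.replicate 16 2) = N) :
    Nat.card {M // VM M} = N * 2 ^ 16 := by
  classical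
  rw [← Nat.card_congr (Equiv.ofBijective toM ⟨toM_inj, toM_surj⟩), Nat.card_sigma]
  have : ∀ f : {f // VF f}, Nat.card (∀ I J, Bool ↪ {s // f.1 s I = J}) = 2 ^ 16 := by
    intro f
    rw [Nat.card_eq_fintype_card]
    simp only [Fintype.card_pi, Fintype.card_embedding_eq, f.2.fib, Fintype.card_bool]
    simp [Nat.descFactorial]
  simp only [this]
  rw [Finset.sum_const, Finset.card_univ, ← Nat.card_eq_fintype_card, count_VF N hN, smul_eq_mul]

def a0 : Equiv.Perm (Fin 8) :=
  Equiv.swap 0 1 * (Equiv.swap 2 3 * (Equiv.swap 4 5 * Equiv.swap 6 7))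

theorem a0_type : a0.cycleType = {2, 2, 2, 2} := by
  have hs : ∀ a b : Fin 8, a ≠ b → (Equiv.swap a b).cycleType = {2} := fun a b h =>
    by
    rw [(Equiv.Perm.isCycle_swap h).cycleType, Equiv.Perm.card_support_swap h]
  rw [a0, Equiv.Perm.Disjoint.cycleType_mul, Equiv.Perm.Disjoint.cycleType_mul,
    Equiv.Perm.Disjoint.cycleType_mul, hs, hs, hs, hs]
  · rfl
  all_goals first | decide | (unfold Equiv.Perm.Disjoint; decide)

def e0 : Fin 8 ≃ Fin 4 × Bool where
  toFun i := (⟨i / 2, by omega⟩, decide ((i : ℕ) % 2 = 1))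
  invFun x := ⟨2 * x.1 + x.2.toNat, by
    have := x.2.toNat_lt; omega⟩
  left_inv := by decide
  right_inv := by decide

theorem exists_E (α : Equiv.Perm (Fin 8)) (hα : α.cycleType = {2, 2, 2, 2}) :
    ∃ E : Fin 8 ≃ Fin 4 × Bool, ∀ i, E (α i) = ((E i).1, !(E i).2) := by
  have : IsConj α a0 := Equiv.Perm.isConj_iff_cycleType_eq.2 (hα.trans a0_type.symm)
  obtain ⟨c, hc⟩ := isConj_iff.1 this
  refine ⟨c.trans e0, fun i => ?_⟩
  have h0 : ∀ j, e0 (a0 j) = ((e0 j).1, !(e0 j).2) := by decide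
  have h1 : c (α i) = a0 (c i) := by rw [← hc]; simp
  simp only [Equiv.trans_apply, h1, h0]

theorem card_L (α β : Equiv.Perm (Fin 8)) (E F : Fin 8 ≃ Fin 4 × Bool)
    (hE : ∀ i, E (α i) = ((E i).1, !(E i).2)) (hF : ∀ i, F (β i) = ((F i).1, !(F i).2)) :
    Nat.card {L : Fin 8 → Fin 8 → Fin 8 // IsLatinSquare L ∧ IsAutotopism α β 1 L} =
      Nat.card {M // VM M} := by
  have hE' : ∀ I x, α (E.symm (I, x)) = E.symm (I, !x) := fun I x => by
    apply E.injective; rw [hE]; simp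
  have hF' : ∀ I x, β (F.symm (I, x)) = F.symm (I, !x) := fun I x => by
    apply F.injective; rw [hF]; simp
  have hL : ∀ L : Fin 8 → Fin 8 → Fin 8, IsAutotopism α β 1 L → ∀ I J x y,
      L (E.symm (I, x)) (F.symm (J, y)) = L (E.symm (I, false)) (F.symm (J, xor x y)) := by
    intro L h I J x y
    cases x with
    | false => simp
    | true =>
      have := h (E.symm (I, true)) (F.symm (J, y))
      rw [hE', hF'] at this
      simpa using this.symm
  refine Nat.card_congr
    { toFun := fun L => ⟨fun I J z => L.1 (E.symm (I, false)) (F.symm (J, z)), ?_, ?_⟩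
      invFun := fun M => ⟨fun i j => M.1 (E i).1 (F j).1 (xor (E i).2 (F j).2), ⟨?_, ?_⟩, ?_⟩
      left_inv := ?_
      right_inv := ?_ }
  · intro I
    exact (L.2.1.1 _).1.comp F.symm.injective
  · rintro J ⟨I, z⟩ ⟨I', z'⟩ h
    simp only at h
    have e1 := hL L.1 L.2.2 I J z false
    have e2 := hL L.1 L.2.2 I' J z' false
    simp only [Bool.xor_false] at e1 e2
    exact E.symm.injective ((L.2.1.2 (F.symm (J, false))).1 (e1.trans (h.trans e2.symm)))
  · intro i
    rw [← Finite.injective_iff_bijective]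
    intro j j' h
    have := M.2.1 (E i).1 (a₁ := ((F j).1, xor (E i).2 (F j).2))
      (a₂ := ((F j').1, xor (E i).2 (F j').2)) h
    simp only [Prod.mk.injEq, Bool.xor_right_inj] at this
    exact F.injective (Prod.ext this.1 this.2)
  · intro j
    rw [← Finite.injective_iff_bijective]
    intro i i' h
    have := M.2.2 (F j).1 (a₁ := ((E i).1, xor (E i).2 (F j).2))
      (a₂ := ((E i').1, xor (E i').2 (F j).2)) h
    simp only [Prod.mk.injEq, Bool.xor_left_inj] at this
    exact E.injective (Prod.ext this.1 this.2)
  · intro i j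
    simp [hE, hF]
  · intro L
    apply Subtype.ext
    funext i j
    have := hL L.1 L.2.2 (E i).1 (F j).1 (E i).2 (F j).2
    simp only [Prod.mk.eta, Equiv.symm_apply_apply] at this
    exact this.symm
  · intro M
    apply Subtype.ext
    funext I J z
    simp

theorem delta_2222_id (α β γ : Equiv.Perm (Fin 8))
    (hα : α.cycleType = {2, 2, 2, 2}) (hβ : β.cycleType = {2, 2, 2, 2}) (hγ : γ = 1) :
    Nat.card {L : Fin 8 → Fin 8 → Fin 8 // IsLatinSquare L ∧ IsAutotopism α β γ L} =
      828396011520 := by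
  subst hγ
  obtain ⟨E, hE⟩ := exists_E α hα
  obtain ⟨F, hF⟩ := exists_E β hβ
  rw [card_L α β E F hE hF, count_VM _ pComp_val]
  norm_num
end

section
/- Let α, β, γ be permutations of {1,...,8}, each consisting of one fixed point and one 7-cycle (cycle type {7}). Then the number of Latin squares of order 8 having Θ = (α,β,γ) as an autotopism is 931. -/
noncomputable section Enumeration

def compat (b x a y : ℕ) : Bool :=
  bif Nat.ble b 6 then
    bif Nat.beq x y then false
    else bif Nat.beq ((x + a) % 7) ((y + b) % 7) then (Nat.beq x 7 || Nat.beq y 7) else true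
  else bif Nat.beq b 7 then !(Nat.beq x y) && !(Nat.beq x 7)
  else !(Nat.beq x 7) && (Nat.beq a 7 || Nat.beq y 7 || !(Nat.beq ((x + a) % 7) (y % 7)))

def okb (n x : ℕ) (l : List ℕ) : ℕ → Bool :=
  List.rec (fun _ => true)
    (fun y _ ih a => bif compat n x (Nat.pred a) y then ih (Nat.pred a) else false) l

def addOne (n x : ℕ) (l : List ℕ) (r : List (List ℕ)) : List (List ℕ) :=
  bif okb n x l n then (x :: l) :: r else r

def step (n : ℕ) (l : List ℕ) (r : List (List ℕ)) : List (List ℕ) :=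
  addOne n 0 l <| addOne n 1 l <| addOne n 2 l <| addOne n 3 l <|
  addOne n 4 l <| addOne n 5 l <| addOne n 6 l <| addOne n 7 l r

def stepAll (k : ℕ) (ls : List (List ℕ)) : List (List ℕ) :=
  List.rec [] (fun l _ r => step k l r) ls

def extn (k : ℕ) : List (List ℕ) :=
  Nat.rec [[]] (fun k ih => stepAll k ih) k

def len (l : List (List ℕ)) : ℕ := List.rec 0 (fun _ _ n => Nat.succ n) l

theorem len_extn : len (extn 9) = 931 := by decide +kernel

theorem len_eq (l : List (List ℕ)) : len l = l.length := by
  induction l with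
  | nil => rfl
  | cons a t ih => simp only [List.length_cons, ← ih]; rfl

def lst (F : ℕ → ℕ) : ℕ → List ℕ
  | 0 => []
  | n + 1 => F n :: lst F n

theorem lst_inj {F G : ℕ → ℕ} {n : ℕ} : lst F n = lst G n ↔ ∀ i < n, F i = G i := by
  induction n with
  | zero => simp [lst]
  | succ n ih =>
    simp only [lst, List.cons.injEq, ih]
    constructor
    · rintro ⟨h, h'⟩ i hi
      rcases Nat.lt_succ_iff_lt_or_eq.1 hi with h1 | rfl
      · exact h' i h1
      · exact h
    · intro h
      exact ⟨h n (by omega), fun i hi => h i (by omega)⟩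

theorem okb_lst (n x : ℕ) (F : ℕ → ℕ) (k : ℕ) :
    okb n x (lst F k) k = true ↔ ∀ a < k, compat n x a (F a) = true := by
  induction k with
  | zero => simp [lst, okb]
  | succ k ih =>
    have : okb n x (lst F (k+1)) (k+1)
      = bif compat n x k (F k) then okb n x (lst F k) k else false := rfl
    rw [this, Bool.cond_false_right, Bool.and_eq_true, ih]
    constructor
    · rintro ⟨h, h'⟩ i hi
      rcases Nat.lt_succ_iff_lt_or_eq.1 hi with h1 | rfl
      · exact h' i h1
      · exact h
    · intro h
      exact ⟨h k (by omega), fun i hi => h i (by omega)⟩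

theorem mem_addOne (n x : ℕ) (l m : List ℕ) (r : List (List ℕ)) :
    m ∈ addOne n x l r ↔ (okb n x l n = true ∧ m = x :: l) ∨ m ∈ r := by
  unfold addOne
  cases okb n x l n <;> simp

theorem mem_step (n : ℕ) (l m : List ℕ) (r : List (List ℕ)) :
    m ∈ step n l r ↔ (∃ x < 8, okb n x l n = true ∧ m = x :: l) ∨ m ∈ r := by
  unfold step
  simp only [mem_addOne]
  constructor
  · rintro (h | h | h | h | h | h | h | h | h)
    any_goals exact Or.inl ⟨_, by norm_num, h⟩
    exact Or.inr h
  · rintro (⟨x, hx, h⟩ | h)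
    · interval_cases x <;> simp [h]
    · simp [h]

theorem mem_stepAll (n : ℕ) (m : List ℕ) (ls : List (List ℕ)) :
    m ∈ stepAll n ls ↔ ∃ l ∈ ls, ∃ x < 8, okb n x l n = true ∧ m = x :: l := by
  induction ls with
  | nil => simp [stepAll]
  | cons l t ih =>
    have : stepAll n (l :: t) = step n l (stepAll n t) := rfl
    rw [this, mem_step, ih]
    simp

theorem nodup_addOne (n x : ℕ) (l : List ℕ) (r : List (List ℕ)) (hr : r.Nodup)
    (h : (x :: l) ∉ r) : (addOne n x l r).Nodup := by
  unfold addOne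
  cases okb n x l n <;> simp [hr, h]

theorem nodup_step (n : ℕ) (l : List ℕ) (r : List (List ℕ)) (hr : r.Nodup)
    (h : ∀ x, (x :: l) ∉ r) : (step n l r).Nodup := by
  unfold step
  repeat' (first | exact hr | apply nodup_addOne)
  all_goals simp [mem_addOne, h]

theorem nodup_stepAll (n : ℕ) (ls : List (List ℕ)) (h : ls.Nodup) : (stepAll n ls).Nodup := by
  induction ls with
  | nil => simp [stepAll]
  | cons l t ih =>
    have : stepAll n (l :: t) = step n l (stepAll n t) := rfl
    rw [this]
    rw [List.nodup_cons] at h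
    apply nodup_step _ _ _ (ih h.2)
    intro x hx
    rw [mem_stepAll] at hx
    obtain ⟨l', hl', y, -, -, e⟩ := hx
    rw [List.cons.injEq] at e
    exact h.1 (e.2 ▸ hl')

theorem nodup_extn (k : ℕ) : (extn k).Nodup := by
  induction k with
  | zero => simp [extn]
  | succ k ih => exact nodup_stepAll k _ ih

theorem mem_extn (k : ℕ) (l : List ℕ) : l ∈ extn k ↔
    ∃ F : ℕ → ℕ, l = lst F k ∧ ∀ b < k, F b < 8 ∧ ∀ a < b, compat b (F b) a (F a) = true := by
  induction k generalizing l with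
  | zero => simp [extn, lst]
  | succ k ih =>
    have : extn (k+1) = stepAll k (extn k) := rfl
    rw [this, mem_stepAll]
    constructor
    · rintro ⟨l', hl', x, hx, hok, rfl⟩
      obtain ⟨F, rfl, hF⟩ := (ih l').1 hl'
      rw [okb_lst] at hok
      refine ⟨fun i => if i = k then x else F i, ?_, ?_⟩
      · simp only [lst, if_true, List.cons.injEq, true_and]
        rw [lst_inj]
        intro i hi
        rw [if_neg (by omega)]
      · intro b hb
        dsimp only
        rcases Nat.lt_succ_iff_lt_or_eq.1 hb with h1 | rfl
        · rw [if_neg (by omega)]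
          refine ⟨(hF b h1).1, fun a ha => ?_⟩
          rw [if_neg (by omega)]
          exact (hF b h1).2 a ha
        · rw [if_pos rfl]
          refine ⟨hx, fun a ha => ?_⟩
          rw [if_neg (by omega)]
          exact hok a ha
    · rintro ⟨F, rfl, hF⟩
      refine ⟨lst F k, (ih _).2 ⟨F, rfl, fun b hb => hF b (by omega)⟩, F k, (hF k (by omega)).1,
        ?_, rfl⟩
      rw [okb_lst]
      exact (hF k (by omega)).2

def Good (F : Fin 9 → Fin 8) : Prop :=
  ∀ b a : Fin 9, a < b → compat b (F b) a (F a) = true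

theorem card_good : Nat.card {F : Fin 9 → Fin 8 // Good F} = 931 := by
  have h1 : Nat.card {l // l ∈ extn 9} = 931 := by
    rw [← len_extn, len_eq, ← List.toFinset_card_of_nodup (nodup_extn 9)]
    rw [← Nat.card_eq_finsetCard]
    exact Nat.card_congr (Equiv.subtypeEquivRight (by simp))
  rw [← h1]
  refine Nat.card_congr (Equiv.ofBijective
    (fun F => ⟨lst (fun i => (F.1 (Fin.ofNat 9 i)).val) 9, ?_⟩) ⟨?_, ?_⟩)
  · rw [mem_extn]
    refine ⟨_, rfl, fun b hb => ⟨Fin.isLt _, fun a ha => ?_⟩⟩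
    have := F.2 (Fin.ofNat 9 b) (Fin.ofNat 9 a)
      (by simp [Fin.lt_def, Nat.mod_eq_of_lt hb, Nat.mod_eq_of_lt (ha.trans hb), ha])
    simpa [Nat.mod_eq_of_lt hb, Nat.mod_eq_of_lt (ha.trans hb)] using this
  · intro F G h
    have h := Subtype.ext_iff.1 h
    simp only at h
    rw [lst_inj] at h
    ext i
    have := h i.1 i.2
    simpa using this
  · rintro ⟨l, hl⟩
    obtain ⟨F, rfl, hF⟩ := (mem_extn _ _).1 hl
    refine ⟨⟨fun i => ⟨F i, (hF i i.2).1⟩, ?_⟩, ?_⟩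
    · intro b a hab
      exact (hF b b.2).2 a hab
    · apply Subtype.ext
      simp only
      rw [lst_inj]
      intro i hi
      simp [Nat.mod_eq_of_lt hi]

end Enumeration

section Squares

def pw (k : ℕ) (x : Fin 8) : Fin 8 :=
  if x = 7 then 7 else ⟨(x.val + k) % 7, by omega⟩

theorem pw_inj : ∀ k : Fin 8, Function.Injective (pw k) := by decide +kernel
theorem pw_zero : ∀ x, pw 0 x = x := by decide +kernel
theorem pw_seven : ∀ x, pw 7 x = x := by decide +kernel
theorem pw_fix : ∀ x, pw 1 x = x → x = 7 := by decide +kernel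
theorem pw_cancel : ∀ i x : Fin 8, i ≠ 7 → pw i (pw (7 - i) x) = x := by decide +kernel
theorem pw_of_zero : ∀ i : Fin 8, i ≠ 7 → pw i 0 = i := by decide +kernel
theorem pw_at_seven (k : ℕ) : pw k 7 = 7 := by simp [pw]
theorem pw_succ (k : ℕ) (x : Fin 8) : pw (k + 1) x = pw 1 (pw k x) := by
  unfold pw
  by_cases h : x = 7
  · simp [h]
  · have : (⟨(x.val + k) % 7, by omega⟩ : Fin 8) ≠ 7 := by
      intro h
      have := congrArg Fin.val h
      simp at this
      omega
    simp only [h, this, if_false]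
    ext
    simp only
    omega
theorem pw_aut1 : ∀ j r : Fin 8, j ≠ 7 → pw (pw 1 j) r = pw 1 (pw j r) := by decide +kernel
theorem pw_aut2 : ∀ i j : Fin 8, i ≠ 7 → pw (7 - (pw 1 i).val) (pw 1 j) = pw (7 - i.val) j := by
  decide +kernel
theorem pw_ne : ∀ i : Fin 8, i ≠ 7 → pw 1 i ≠ 7 := by decide +kernel

def Aut (L : Fin 8 → Fin 8 → Fin 8) : Prop := ∀ i j, L (pw 1 i) (pw 1 j) = pw 1 (L i j)

theorem Aut.pow {L} (h : Aut L) (k : ℕ) (i j) : L (pw k i) (pw k j) = pw k (L i j) := by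
  induction k with
  | zero => simp [pw_zero]
  | succ k ih => rw [pw_succ k i, pw_succ k j, h, ih, ← pw_succ]

theorem Aut.row {L} (h : Aut L) (i j) (hi : i ≠ 7) : L i j = pw i (L 0 (pw (7 - i) j)) := by
  rw [← h.pow, pw_cancel _ _ hi, pw_of_zero _ hi]

theorem Aut.col {L} (h : Aut L) (i j) (hj : j ≠ 7) : L i j = pw j (L (pw (7 - j) i) 0) := by
  rw [← h.pow, pw_cancel _ _ hj, pw_of_zero _ hj]

theorem Aut.row7 {L} (h : Aut L) (j) (hj : j ≠ 7) : L 7 j = pw j (L 7 0) := by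
  rw [← h.pow, pw_at_seven, pw_of_zero _ hj]

theorem Aut.col7 {L} (h : Aut L) (i) (hj : i ≠ 7) : L i 7 = pw i (L 0 7) := by
  rw [← h.pow, pw_at_seven, pw_of_zero _ hj]

theorem Aut.corner {L} (h : Aut L) : L 7 7 = 7 := by
  apply pw_fix
  rw [← h, pw_at_seven]

theorem pw_inj' (k : Fin 8) : Function.Injective (pw (7 - k)) := by
  have := pw_inj ⟨7 - k.val, by omega⟩
  exact this

theorem Aut.latin {L} (h : Aut L) (h1 : Function.Injective (L 0)) (h2 : L 7 0 ≠ 7)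
    (h3 : Function.Injective fun i => L i 0) (h4 : L 0 7 ≠ 7) : IsLatinSquare L := by
  have key : ∀ r : Fin 8, r ≠ 7 →
      Function.Injective (fun j : Fin 8 => if j = 7 then 7 else pw j r) := by decide +kernel
  constructor
  · intro i
    rw [← Finite.injective_iff_bijective]
    by_cases hi : i = 7
    · subst hi
      convert key _ h2 using 2 with j
      split_ifs with hj
      · rw [hj, h.corner]
      · exact h.row7 j hj
    · have : L i = pw i ∘ L 0 ∘ pw (7 - i) := by
        ext1 j; exact h.row i j hi
      rw [this]
      exact (pw_inj i).comp (h1.comp (pw_inj' i))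
  · intro j
    rw [← Finite.injective_iff_bijective]
    by_cases hj : j = 7
    · subst hj
      convert key _ h4 using 2 with i
      split_ifs with hj
      · rw [hj, h.corner]
      · exact h.col7 i hj
    · have : (fun i => L i j) = pw j ∘ (fun i => L i 0) ∘ pw (7 - j) := by
        ext1 i; exact h.col i j hj
      rw [this]
      exact (pw_inj j).comp (h3.comp (pw_inj' j))

def mk (F : Fin 9 → Fin 8) (i j : Fin 8) : Fin 8 :=
  if i = 7 then (if j = 7 then 7 else pw j (F 8))
  else pw i (F (pw (7 - i) j).castSucc)

theorem mk_aut (F) : Aut (mk F) := by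
  intro i j
  unfold mk
  by_cases hi : i = 7
  · subst hi
    by_cases hj : j = 7
    · subst hj; simp [pw_at_seven]
    · simp [pw_at_seven, hj, pw_ne, pw_aut1]
  · simp [hi, pw_ne, pw_aut1, pw_aut2]

def enc (L : Fin 8 → Fin 8 → Fin 8) (a : Fin 9) : Fin 8 :=
  if h : a.val < 8 then L 0 ⟨a, h⟩ else L 7 0

theorem enc_mk (F) : enc (mk F) = F := by
  ext1 a
  unfold enc mk
  by_cases h1 : a.val < 8
  · simp [h1, pw_zero, pw_seven]
  · have : a = 8 := by omega
    subst this
    simp [pw_zero]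

theorem mk_enc {L} (h : Aut L) : mk (enc L) = L := by
  ext1 i
  ext1 j
  unfold enc mk
  split_ifs with h1 h2
  · rw [h1, h2, h.corner]
  · simp [h1, h.row7 j h2]
  · simp [h.row i j h1]

theorem cm1 : ∀ a b x y : Fin 8, a < b → b < 7 → x ≠ y → pw (7 - b) x ≠ pw (7 - a) y →
    compat b x a y = true := by decide +kernel
theorem cm1' : ∀ a b x y : Fin 8, a < b → b < 7 → compat b x a y = true →
    x ≠ y ∧ pw (7 - b) x ≠ pw (7 - a) y := by decide +kernel
theorem cm2 : ∀ a x y : Fin 8, a < 7 → (compat 7 x a y = true ↔ x ≠ y ∧ x ≠ 7) := by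
  decide +kernel
theorem cm3 : ∀ a x y : Fin 8, (compat 8 x a y = true ↔ x ≠ 7 ∧ (a < 7 → x ≠ pw (7 - a) y)) := by
  decide +kernel

theorem enc_cast (L) (b : Fin 8) : enc L b.castSucc = L 0 b := by simp [enc]
theorem enc_last (L) : enc L 8 = L 7 0 := by simp [enc]

theorem col_key {L} (h : Aut L) (b : Fin 8) (hb : b < 7) :
    L (pw (7 - b) 0) 0 = pw (7 - b) (L 0 b) := by
  rw [← h.pow]
  have : ∀ b : Fin 8, b < 7 → pw (7 - b) b = 0 := by decide +kernel
  rw [this b hb]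

theorem good_iff {L} (h : Aut L) : Good (enc L) ↔ IsLatinSquare L := by
  constructor
  · intro hG
    have hG1 : ∀ b a : Fin 8, a < b → compat b (L 0 b) a (L 0 a) = true := by
      intro b a hab
      have := hG b.castSucc a.castSucc (by simpa using hab)
      simpa only [enc_cast, Fin.val_castSucc] using this
    have hG2 : ∀ a : Fin 8, compat 8 (L 7 0) a (L 0 a) = true := by
      intro a
      have := hG 8 a.castSucc (by rw [Fin.lt_def]; exact a.2)
      rw [enc_cast, enc_last] at this
      exact this
    have P1 : ∀ b a : Fin 8, a < b → L 0 b ≠ L 0 a := by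
      intro b a hab
      by_cases hb : b < 7
      · exact (cm1' _ _ _ _ hab hb (hG1 b a hab)).1
      · have : b = 7 := by omega
        subst this
        exact ((cm2 _ _ _ hab).1 (hG1 _ a hab)).1
    have P4 : ∀ b a : Fin 8, a < b → b < 7 → pw (7 - b) (L 0 b) ≠ pw (7 - a) (L 0 a) :=
      fun b a hab hb => (cm1' _ _ _ _ hab hb (hG1 b a hab)).2
    have P2 : L 0 7 ≠ 7 := ((cm2 0 _ _ (by decide)).1 (hG1 7 0 (by decide))).2
    have P3 : L 7 0 ≠ 7 := ((cm3 0 _ _).1 (hG2 0)).1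
    have P5 : ∀ a : Fin 8, a < 7 → L 7 0 ≠ pw (7 - a) (L 0 a) :=
      fun a => ((cm3 a _ _).1 (hG2 a)).2
    refine h.latin ?_ P3 ?_ P2
    · intro a b hab
      rcases lt_trichotomy a b with hl | he | hl
      · exact absurd hab.symm (P1 _ _ hl)
      · exact he
      · exact absurd hab (P1 _ _ hl)
    · have hex : ∀ i : Fin 8, i ≠ 7 → ∃ b : Fin 8, b < 7 ∧ pw (7 - b) 0 = i := by decide +kernel
      intro i k hik
      dsimp only at hik
      by_cases hi : i = 7
      · by_cases hk : k = 7
        · rw [hi, hk]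
        · obtain ⟨b, hb, rfl⟩ := hex k hk
          rw [hi, col_key h b hb] at hik
          exact absurd hik (P5 b hb)
      · obtain ⟨a, ha, rfl⟩ := hex i hi
        rw [col_key h a ha] at hik
        by_cases hk : k = 7
        · rw [hk] at hik
          exact absurd hik.symm (P5 a ha)
        · obtain ⟨b, hb, rfl⟩ := hex k hk
          rw [col_key h b hb] at hik
          rcases lt_trichotomy a b with hl | he | hl
          · exact absurd hik.symm (P4 _ _ hl hb)
          · rw [he]
          · exact absurd hik (P4 _ _ hl ha)
  · rintro ⟨hr, hc⟩ b a hab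
    have hdist : ∀ a b : Fin 8, a < b → b < 7 → pw (7 - b) 0 ≠ pw (7 - a) 0 := by decide +kernel
    have h7 : ∀ a : Fin 8, a < 7 → 7 ≠ pw (7 - a) 0 := by decide +kernel
    have P2 : L 0 7 ≠ 7 := by
      intro e
      have := (hc 7).1 (e.trans h.corner.symm)
      exact absurd this (by decide)
    have P3 : L 7 0 ≠ 7 := by
      intro e
      have := (hr 7).1 (e.trans h.corner.symm)
      exact absurd this (by decide)
    obtain ⟨a, rfl⟩ : ∃ a' : Fin 8, a = a'.castSucc := ⟨⟨a, by omega⟩, rfl⟩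
    rw [enc_cast]
    by_cases hb : b = 8
    · subst hb
      rw [enc_last]
      refine (cm3 a _ _).2 ⟨P3, fun ha e => ?_⟩
      rw [← col_key h a ha] at e
      exact h7 a ha ((hc 0).1 e)
    · obtain ⟨b, rfl⟩ : ∃ b' : Fin 8, b = b'.castSucc := ⟨⟨b, by omega⟩, rfl⟩
      rw [enc_cast]
      replace hab : a < b := by simpa using hab
      have hne : L 0 b ≠ L 0 a := fun e => hab.ne' ((hr 0).1 e)
      by_cases hb7 : b < 7
      · refine cm1 a b _ _ hab hb7 hne fun e => ?_
        rw [← col_key h a (hab.trans hb7), ← col_key h b hb7] at e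
        exact hdist a b hab hb7 ((hc 0).1 e)
      · have : b = 7 := by omega
        subst this
        exact (cm2 a _ _ hab).2 ⟨hne, P2⟩

end Squares

theorem delta_777 (α β γ : Equiv.Perm (Fin 8))
    (hα : α.cycleType = {7}) (hβ : β.cycleType = {7}) (hγ : γ.cycleType = {7}) :
    Nat.card {L : Fin 8 → Fin 8 → Fin 8 // IsLatinSquare L ∧ IsAutotopism α β γ L} =
      931 := by
  have hs : ∀ x, (Fin.cycleRange (6 : Fin 8)) x = pw 1 x := by decide +kernel
  have conj : ∀ σ : Equiv.Perm (Fin 8), σ.cycleType = {7} →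
      ∃ e : Equiv.Perm (Fin 8), ∀ x, e (pw 1 x) = σ (e x) := by
    intro σ h
    have : IsConj (Fin.cycleRange (6 : Fin 8)) σ := by
      rw [Equiv.Perm.isConj_iff_cycleType_eq, h, Fin.cycleType_cycleRange (by decide)]
      rfl
    obtain ⟨e, he⟩ := isConj_iff.1 this
    refine ⟨e, fun x => ?_⟩
    rw [← he, ← hs]
    simp
  obtain ⟨a, ha⟩ := conj α hα
  obtain ⟨b, hb⟩ := conj β hβ
  obtain ⟨c, hc⟩ := conj γ hγ
  rw [← card_good]
  trans Nat.card {L : Fin 8 → Fin 8 → Fin 8 // IsLatinSquare L ∧ Aut L}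
  · refine Nat.card_congr (Equiv.subtypeEquiv
      (Equiv.arrowCongr a.symm (Equiv.arrowCongr b.symm c.symm)) fun L => ?_)
    have e : ∀ i j, (Equiv.arrowCongr a.symm (Equiv.arrowCongr b.symm c.symm)) L i j
      = c.symm (L (a i) (b j)) := fun i j => rfl
    generalize (Equiv.arrowCongr a.symm (Equiv.arrowCongr b.symm c.symm)) L = M at e
    refine and_congr (and_congr ?_ ?_) ?_
    · have : ∀ i, M i = c.symm ∘ L (a i) ∘ b := fun i => funext fun j => e i j
      simp only [this]
      simp only [EquivLike.comp_bijective, EquivLike.bijective_comp]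
      exact (a.forall_congr_right (q := fun i => Function.Bijective (L i))).symm
    · have : ∀ j, (fun i => M i j) = c.symm ∘ (fun i => L i (b j)) ∘ a :=
        fun j => funext fun i => e i j
      simp only [this]
      simp only [EquivLike.comp_bijective, EquivLike.bijective_comp]
      exact (b.forall_congr_right (q := fun j => Function.Bijective fun i => L i j)).symm
    · unfold IsAutotopism Aut
      simp only [e, ha, hb]
      rw [← a.forall_congr_right]
      refine forall_congr' fun i => ?_
      rw [← b.forall_congr_right]
      refine forall_congr' fun j => ?_
      rw [Equiv.symm_apply_eq, hc, Equiv.apply_symm_apply]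
  · exact Nat.card_congr
      { toFun := fun L => ⟨enc L.1, (good_iff L.2.2).2 L.2.1⟩
        invFun := fun F => ⟨mk F.1, (good_iff (mk_aut _)).1 (by rw [enc_mk]; exact F.2), mk_aut _⟩
        left_inv := fun L => Subtype.ext (mk_enc L.2.2)
        right_inv := fun F => Subtype.ext (enc_mk F.1) }
end
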